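/- Soundness and completeness of H_KT4 with respect to the RNmatrix RM_KT4: for every set of formulas Γ and every formula A, Γ ⊢_{H_KT4} A if and only if every valuation v ∈ F_KT4 that designates all formulas of Γ also designates A. -/

import Mathlib

/-- Formulas of the modal language: propositional variables, negation,
the modality ⊖ (here `box`), and implication. -/
inductive Form : Type
  | var : ℕ → Form
  | neg : Form → Form
  | box : Form → Form
  | imp : Form → Form → Form

/-- A valuation `v = (v1, v2)` over the 4-valued Nmatrix for the minimal modal
logic M: `v1` behaves classically on ¬ and →, and `v1(⊖A) = v2(A)`;
`v2` is otherwise unconstrained. -/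
structure Val where
  v1 : Form → Fin 2
  v2 : Form → Fin 2
  neg_eq : ∀ A, v1 (Form.neg A) = 1 - v1 A
  imp_eq : ∀ A B, v1 (Form.imp A B) = max (1 - v1 A) (v1 B)
  box_eq : ∀ A, v1 (Form.box A) = v2 A

/-- The restriction defining F_K: valuations satisfying the (K) condition. -/
def FK (v : Val) : Prop :=
  ∀ A B : Form, v.v2 (A.imp B) ≤ max (1 - v.v2 A) (v.v2 B)

/-- The restriction defining F_KT4. -/
def FKT4 (v : Val) : Prop :=
  FK v ∧ (∀ A : Form, v.v2 A ≤ v.v1 A) ∧ (∀ A : Form, v.v2 A ≤ v.v2 (Form.box A))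

/-- The Hilbert calculus H_KT4: H plus axiom schemas (K), (T) and (4). -/
inductive HKT4 : Set Form → Form → Prop
  | hyp {Γ A} : A ∈ Γ → HKT4 Γ A
  | ax1 {Γ} (A B : Form) : HKT4 Γ (A.imp (B.imp A))
  | ax2 {Γ} (A B C : Form) :
      HKT4 Γ ((A.imp (B.imp C)).imp ((A.imp B).imp (A.imp C)))
  | ax3 {Γ} (A B : Form) : HKT4 Γ ((B.neg.imp A.neg).imp (A.imp B))
  | axK {Γ} (A B : Form) :
      HKT4 Γ ((Form.box (A.imp B)).imp ((Form.box A).imp (Form.box B)))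
  | axT {Γ} (A : Form) : HKT4 Γ ((Form.box A).imp A)
  | ax4 {Γ} (A : Form) : HKT4 Γ ((Form.box A).imp (Form.box (Form.box A)))
  | mp {Γ A B} : HKT4 Γ (A.imp B) → HKT4 Γ A → HKT4 Γ B

theorem HKT4.mono {Γ Δ : Set Form} {A : Form} (hs : Γ ⊆ Δ) (h : HKT4 Γ A) : HKT4 Δ A := by
  induction h with
  | hyp h => exact .hyp (hs h)
  | ax1 => exact .ax1 _ _
  | ax2 => exact .ax2 _ _ _
  | ax3 => exact .ax3 _ _
  | axK => exact .axK _ _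
  | axT => exact .axT _
  | ax4 => exact .ax4 _
  | mp _ _ h1 h2 => exact .mp h1 h2

theorem HKT4.sound {Γ : Set Form} {A : Form} (h : HKT4 Γ A) (v : Val) (hv : FKT4 v)
    (hΓ : ∀ B ∈ Γ, v.v1 B = 1) : v.v1 A = 1 := by
  obtain ⟨hK, hT, h4⟩ := hv
  induction h with
  | hyp h => exact hΓ _ h
  | ax1 A B =>
    simp only [v.imp_eq]
    generalize v.v1 A = a; generalize v.v1 B = b
    revert a b; decide
  | ax2 A B C =>
    simp only [v.imp_eq]
    generalize v.v1 A = a; generalize v.v1 B = b; generalize v.v1 C = c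
    revert a b c; decide
  | ax3 A B =>
    simp only [v.imp_eq, v.neg_eq]
    generalize v.v1 A = a; generalize v.v1 B = b
    revert a b; decide
  | axK A B =>
    have := hK A B
    simp only [v.imp_eq, v.box_eq]
    revert this
    generalize v.v2 A = a; generalize v.v2 B = b; generalize v.v2 (A.imp B) = c
    revert a b c; decide
  | axT A =>
    have := hT A
    simp only [v.imp_eq, v.box_eq]
    revert this
    generalize v.v2 A = a; generalize v.v1 A = b
    revert a b; decide
  | ax4 A =>
    have := h4 A
    simp only [v.imp_eq, v.box_eq]
    revert this
    generalize v.v2 A = a; generalize v.v2 A.box = b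
    revert a b; decide
  | @mp A B _ _ h1 h2 =>
    rw [v.imp_eq] at h1
    revert h1 h2
    generalize v.v1 A = a; generalize v.v1 B = b
    revert a b; decide

theorem HKT4.idd {Γ : Set Form} (A : Form) : HKT4 Γ (A.imp A) :=
  .mp (.mp (.ax2 A (A.imp A) A) (.ax1 _ _)) (.ax1 _ _)

theorem HKT4.ded {Γ : Set Form} {A B : Form} (h : HKT4 (insert A Γ) B) : HKT4 Γ (A.imp B) := by
  generalize hD : insert A Γ = D at h
  induction h with
  | hyp h =>
    subst hD
    rcases h with rfl | h
    · exact .idd _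
    · exact .mp (.ax1 _ _) (.hyp h)
  | ax1 => exact .mp (.ax1 _ _) (.ax1 _ _)
  | ax2 => exact .mp (.ax1 _ _) (.ax2 _ _ _)
  | ax3 => exact .mp (.ax1 _ _) (.ax3 _ _)
  | axK => exact .mp (.ax1 _ _) (.axK _ _)
  | axT => exact .mp (.ax1 _ _) (.axT _)
  | ax4 => exact .mp (.ax1 _ _) (.ax4 _)
  | mp _ _ h1 h2 => exact .mp (.mp (.ax2 _ _ _) h1) h2

theorem HKT4.tr {Γ : Set Form} {A B C : Form} (h : HKT4 Γ (A.imp B)) (h' : HKT4 Γ (B.imp C)) :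
    HKT4 Γ (A.imp C) :=
  .mp (.mp (.ax2 _ _ _) (.mp (.ax1 _ _) h')) h

theorem HKT4.expl {Γ : Set Form} (B C : Form) : HKT4 Γ (B.neg.imp (B.imp C)) :=
  .tr (.ax1 _ C.neg) (.ax3 _ _)

theorem HKT4.clav {Γ : Set Form} {A : Form} (h : HKT4 Γ (A.neg.imp A)) : HKT4 Γ A :=
  .mp (.mp (.ax3 (A.imp A) A) (.mp (.mp (.ax2 _ _ _) (.expl A _)) h)) (.idd A)

theorem HKT4.dne {Γ : Set Form} (B : Form) : HKT4 Γ (B.neg.neg.imp B) :=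
  .ded (.clav (.mp (.expl B.neg B) (.hyp (Set.mem_insert _ _))))

theorem HKT4.dni {Γ : Set Form} (B : Form) : HKT4 Γ (B.imp B.neg.neg) :=
  .mp (.ax3 _ _) (.dne _)

theorem HKT4.cas {Γ : Set Form} {A B : Form} (h : HKT4 Γ (B.imp A)) (h' : HKT4 Γ (B.neg.imp A)) :
    HKT4 Γ A :=
  .clav (.tr (.mp (.ax3 _ _) (.tr (.dne B) (.tr h (.dni A)))) h')

theorem HKT4.cpt {c : Set (Set Form)} (hc : IsChain (· ⊆ ·) c) (hne : c.Nonempty) {A : Form}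
    (h : HKT4 (⋃₀ c) A) : ∃ s ∈ c, HKT4 s A := by
  obtain ⟨s0, hs0⟩ := hne
  generalize hD : ⋃₀ c = D at h
  induction h with
  | hyp h =>
    subst hD
    obtain ⟨s, hs, h⟩ := h
    exact ⟨s, hs, .hyp h⟩
  | ax1 => exact ⟨s0, hs0, .ax1 _ _⟩
  | ax2 => exact ⟨s0, hs0, .ax2 _ _ _⟩
  | ax3 => exact ⟨s0, hs0, .ax3 _ _⟩
  | axK => exact ⟨s0, hs0, .axK _ _⟩
  | axT => exact ⟨s0, hs0, .axT _⟩
  | ax4 => exact ⟨s0, hs0, .ax4 _⟩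
  | mp _ _ h1 h2 =>
    obtain ⟨s, hs, h1⟩ := h1
    obtain ⟨t, ht, h2⟩ := h2
    rcases hc.total hs ht with hst | hst
    · exact ⟨t, ht, .mp (HKT4.mono hst h1) h2⟩
    · exact ⟨s, hs, .mp h1 (HKT4.mono hst h2)⟩

open Classical in
theorem HKT4.complete {Γ : Set Form} {A : Form}
    (h : ∀ v : Val, FKT4 v → (∀ B ∈ Γ, v.v1 B = 1) → v.v1 A = 1) : HKT4 Γ A := by
  by_contra hA
  obtain ⟨D, hGD, hmax⟩ := zorn_subset_nonempty {D : Set Form | ¬ HKT4 D A}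
    (fun c hc hch hne => ⟨⋃₀ c, fun hh => by
      obtain ⟨s, hs, h'⟩ := HKT4.cpt hch hne hh
      exact hc hs h', fun s hs => Set.subset_sUnion_of_mem hs⟩) Γ hA
  have hD : ¬ HKT4 D A := hmax.prop
  have out : ∀ B, B ∉ D → HKT4 D (B.imp A) := fun B hB => by
    by_contra hn
    have : ¬ HKT4 (insert B D) A := fun hh => hn hh.ded
    exact hB (hmax.le_of_ge (y := insert B D) this (Set.subset_insert _ _) (Set.mem_insert _ _))
  have cl : ∀ B, HKT4 D B → B ∈ D := fun B hB => by
    by_contra hn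
    exact hD (.mp (out B hn) hB)
  have hneg : ∀ B, B.neg ∈ D ↔ B ∉ D := fun B =>
    ⟨fun h1 h2 => hD (.mp (.mp (.expl B A) (.hyp h1)) (.hyp h2)),
     fun h1 => by
      by_contra h2
      exact hD (.cas (out _ h1) (out _ h2))⟩
  have himp : ∀ B C, B.imp C ∈ D ↔ (B ∈ D → C ∈ D) := fun B C =>
    ⟨fun h1 h2 => cl _ (.mp (.hyp h1) (.hyp h2)), fun h1 => by
      by_cases hB : B ∈ D
      · exact cl _ (.mp (.ax1 _ _) (.hyp (h1 hB)))
      · exact cl _ (.mp (.expl _ _) (.hyp ((hneg B).2 hB)))⟩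
  let v : Val :=
    { v1 := fun B => if B ∈ D then 1 else 0
      v2 := fun B => if B.box ∈ D then 1 else 0
      neg_eq := fun B => by
        by_cases hB : B ∈ D <;> simp [hneg, hB]
      imp_eq := fun B C => by
        by_cases hB : B ∈ D <;> by_cases hC : C ∈ D <;> simp [himp, hB, hC]
      box_eq := fun B => rfl }
  have hv : FKT4 v := by
    refine ⟨fun B C => ?_, fun B => ?_, fun B => ?_⟩
    · have := (himp _ _).1 (cl _ (.axK B C))
      rw [himp] at this
      by_cases h1 : (B.imp C).box ∈ D <;> by_cases h2 : B.box ∈ D <;>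
        by_cases h3 : C.box ∈ D <;> simp_all [v]
    · have := (himp _ _).1 (cl _ (.axT B))
      by_cases h1 : B.box ∈ D <;> simp_all [v]
    · have := (himp _ _).1 (cl _ (.ax4 B))
      by_cases h1 : B.box ∈ D <;> simp_all [v]
  have hfin := h v hv (fun B hB => by simp [v, hGD hB])
  have hn : A ∉ D := fun hh => hD (.hyp hh)
  simp [v, hn] at hfin

/-- Soundness and completeness of H_KT4 w.r.t. the RNmatrix RM_KT4. -/
theorem soundness_completeness_HKT4 (Γ : Set Form) (A : Form) :
    HKT4 Γ A ↔ ∀ v : Val, FKT4 v → (∀ B ∈ Γ, v.v1 B = 1) → v.v1 A = 1 :=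
  ⟨fun h v hv hG => h.sound v hv hG, HKT4.complete⟩
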